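/- Let n ≥ 2, d ≥ 1 be integers, let S ⊆ [n]^∞ be a d-maximal set, let w ∈ S, and let ℓ ≥ 0, k ≥ 0, m ≥ 0 be integers with m ≤ k. Let t be a template of weight m that is regular with respect to w. Then, writing S^{(ℓ)}_k = {a ∈ S^{(ℓ)} : dist(a,w) = k}, we have |S^{(ℓ)}_k[t]| ≤ Sun(d+n, 2k−2m), where Sun(p,0) is interpreted as 1. -/

import Mathlib

/-- Hamming distance between infinite words over `Fin n`, as an extended natural number. -/
noncomputable def hDist (n : ℕ) (a b : ℕ → Fin n) : ℕ∞ := {i | a i ≠ b i}.encard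

/-- The `r`-ball around `a`. -/
def hBall (n : ℕ) (a : ℕ → Fin n) (r : ℕ) : Set (ℕ → Fin n) := {x | hDist n x a ≤ (r : ℕ∞)}

/-- `S` is `d`-maximal: it has diameter `d` and any point within distance `d`
of all of `S` already belongs to `S`. -/
def IsDMaximal (n d : ℕ) (S : Set (ℕ → Fin n)) : Prop :=
  (∀ a ∈ S, ∀ b ∈ S, hDist n a b ≤ (d : ℕ∞)) ∧
  (∃ a ∈ S, ∃ b ∈ S, hDist n a b = (d : ℕ∞)) ∧
  (∀ x : ℕ → Fin n, (∀ s ∈ S, hDist n x s ≤ (d : ℕ∞)) → x ∈ S)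

/-- `S` contains an `r`-ball. -/
def ContainsBall (n : ℕ) (S : Set (ℕ → Fin n)) (r : ℕ) : Prop :=
  ∃ a, hBall n a r ⊆ S

/-- `S^(ℓ)`: centers of `ℓ`-balls contained in `S` that are not contained in any
`(ℓ+1)`-ball inside `S`. -/
def Sell (n : ℕ) (S : Set (ℕ → Fin n)) (ℓ : ℕ) : Set (ℕ → Fin n) :=
  {a ∈ S | hBall n a ℓ ⊆ S ∧
    ¬ ∃ b, hBall n a ℓ ⊆ hBall n b (ℓ + 1) ∧ hBall n b (ℓ + 1) ⊆ S}

/-- A word `a` fits the template `t` (entries `none` are wildcards). -/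
def Fits (n : ℕ) (a : ℕ → Fin n) (t : ℕ → Option (Fin n)) : Prop :=
  ∀ i x, t i = some x → a i = x

/-- A template is regular with respect to `w` if it never fixes the letter of `w`. -/
def RegularWrt (n : ℕ) (w : ℕ → Fin n) (t : ℕ → Option (Fin n)) : Prop :=
  ∀ i, t i ≠ some (w i)

/-- A family of `p` sets forming a sunflower: `p` distinct sets whose pairwise
intersections are all equal. -/
def IsSunflowerFam (p : ℕ) (F : Finset (Finset ℕ)) : Prop :=
  F.card = p ∧ ∃ C : Finset ℕ, ∀ A ∈ F, ∀ B ∈ F, A ≠ B → A ∩ B = C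

/-- `Sun p k`: the least `N` such that every family of more than `N` distinct
`k`-element sets contains a `p`-sunflower. -/
noncomputable def Sun (p k : ℕ) : ℕ :=
  sInf {N : ℕ | ∀ F : Finset (Finset ℕ), (∀ A ∈ F, A.card = k) → N < F.card →
    ∃ G ⊆ F, IsSunflowerFam p G}

/-! Overwriting `w` by the template `t` produces a word `v` lying between `w` and every word that
fits `t`, so `S^(ℓ)_k[t]` is contained in the sphere of radius `k - m` around `v` and the template
disappears from the problem.

For an arbitrary word `w`, encode `a` by the symmetric difference of the graphs of `a` and `w`, a
set of size `2 * dist(a, w)`. If more than `Sun(d + n, 2k)` words of `S^(ℓ)` were at distance `k`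
from `w`, then `d + n` of them would be encoded by a sunflower. As soon as two of them differ from
`w` at `i`, the pair `(i, w i)` is in the core, so all of them differ from `w` at `i`; by pigeonhole
on the letters two of them, hence all, agree there. So there is a word `b` from which these words
differ in pairwise disjoint sets of the same size `r > 0`. If a word `s ∈ S` differed from `b` on
each of these sets, it would differ from each of these words in at least `d + n - 1 > d` places; so
`s` agrees with `b` on one of them, that is, `b` lies between `s` and one of the words. As that word
is the centre of an `ℓ`-ball inside `S`, this gives `dist(b, s) ≤ d - ℓ - r`. By maximality `S`
contains `Ball(b, ℓ + r)`, and with it an `(ℓ+1)`-ball containing the `ℓ`-ball around any of the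
words, against the definition of `S^(ℓ)`. -/

open Finset Function

open scoped Nat symmDiff

/-! ### Sunflowers -/

section Sunflower

variable {ι α β : Type*}

/-- The family `(E i)` indexed by `i ∈ s` is a sunflower: its members have a common pairwise
intersection, the core. The codomain is any type with `⊓`, to cover both `Finset` and `Set`. -/
def IsSunflowerOn [Min β] (s : Set ι) (E : ι → β) : Prop :=
  ∃ C, s.Pairwise fun i j ↦ E i ⊓ E j = C

theorem IsSunflowerOn.mem_of_mem_of_mem {s : Set ι} {E : ι → Set α} (h : IsSunflowerOn s E)
    {i j l : ι} (hi : i ∈ s) (hj : j ∈ s) (hl : l ∈ s) (hij : i ≠ j) {x : α}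
    (hxi : x ∈ E i) (hxj : x ∈ E j) : x ∈ E l := by
  obtain ⟨C, hC⟩ := h
  rcases eq_or_ne i l with rfl | hil
  · exact hxi
  · have hx : x ∈ E i ⊓ E l := by
      rw [hC hi hl hil, ← hC hi hj hij]
      exact ⟨hxi, hxj⟩
    exact hx.2

theorem exists_pairwiseDisjoint_or_exists_hittingSet {s : Finset ι} {E : ι → Finset α} {k : ℕ}
    (hne : ∀ i ∈ s, (E i).Nonempty) (hcard : ∀ i ∈ s, #(E i) ≤ k) (p : ℕ) :
    (∃ t ⊆ s, #t = p + 1 ∧ (t : Set ι).PairwiseDisjoint E) ∨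
      ∃ U : Finset α, #U ≤ p * k ∧ ∀ i ∈ s, ∃ x ∈ U, x ∈ E i := by
  classical
  obtain ⟨t, ht⟩ := Finset.exists_maximal
    (s := s.powerset.filter fun t : Finset ι ↦ (t : Set ι).PairwiseDisjoint E) ⟨∅, by simp⟩
  obtain ⟨hts, hdisj⟩ : t ⊆ s ∧ (t : Set ι).PairwiseDisjoint E := by simpa using ht.prop
  rcases lt_or_ge p #t with hpt | htp
  · obtain ⟨u, hut, hu⟩ := exists_subset_card_eq (Nat.succ_le_of_lt hpt)
    exact .inl ⟨u, hut.trans hts, hu, hdisj.subset (coe_subset.2 hut)⟩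
  · refine .inr ⟨t.biUnion E, ?_, fun i hi ↦ ?_⟩
    · exact (card_biUnion_le_card_mul t E _ fun i hi ↦ hcard i (hts hi)).trans (by gcongr)
    · by_contra! hmiss
      have hdisj_i : ∀ j ∈ t, Disjoint (E i) (E j) := fun j hj ↦
        disjoint_left.2 fun x hxi hxj ↦ hmiss x (mem_biUnion.2 ⟨j, hj, hxj⟩) hxi
      have hit : i ∈ t := by
        refine ht.le_of_ge (y := insert i t) ?_ (subset_insert i t) (mem_insert_self i t)
        rw [mem_filter, mem_powerset, coe_insert]
        exact ⟨insert_subset hi hts, hdisj.insert fun j hj _ ↦ hdisj_i j hj⟩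
      exact (hne i hi).ne_empty (disjoint_self.1 (hdisj_i i hit))

theorem IsSunflowerOn.of_erase [DecidableEq α] {s : Set ι} {E : ι → Finset α} {x : α}
    (h : IsSunflowerOn s fun i ↦ (E i).erase x) (hx : ∀ i ∈ s, x ∈ E i) : IsSunflowerOn s E := by
  obtain ⟨C, hC⟩ := h
  refine ⟨insert x C, fun i hi j hj hij ↦ ?_⟩
  calc E i ∩ E j = insert x ((E i).erase x) ∩ insert x ((E j).erase x) := by
        rw [insert_erase (hx i hi), insert_erase (hx j hj)]
    _ = insert x ((E i).erase x ∩ (E j).erase x) := (insert_inter_distrib _ _ x).symm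
    _ = insert x C := congrArg (insert x) (hC hi hj hij)

theorem exists_isSunflowerOn_of_factorial_mul_pow_lt_card [DecidableEq α] (p k : ℕ)
    {s : Finset ι} {E : ι → Finset α} (hinj : (s : Set ι).InjOn E) (hcard : ∀ i ∈ s, #(E i) = k)
    (hs : k ! * p ^ k < #s) :
    ∃ t ⊆ s, #t = p + 1 ∧ IsSunflowerOn (t : Set ι) E := by
  induction k generalizing s E with
  | zero =>
    obtain ⟨i, hi, j, hj, hij⟩ := one_lt_card.1 (by simpa using hs)
    have hEij : E i = E j :=
      (card_eq_zero.1 (hcard i hi)).trans (card_eq_zero.1 (hcard j hj)).symm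
    exact absurd (hinj hi hj hEij) hij
  | succ k ih =>
    have hne : ∀ i ∈ s, (E i).Nonempty := fun i hi ↦
      card_pos.1 ((Nat.succ_pos k).trans_eq (hcard i hi).symm)
    rcases exists_pairwiseDisjoint_or_exists_hittingSet hne (fun i hi ↦ (hcard i hi).le) p with
      ⟨t, hts, ht, hdisj⟩ | ⟨U, hUcard, hU⟩
    · exact ⟨t, hts, ht, ∅, fun i hi j hj hij ↦ disjoint_iff.1 (hdisj hi hj hij)⟩
    · obtain ⟨i₀, hi₀⟩ : s.Nonempty := card_pos.1 (Nat.zero_lt_of_lt hs)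
      have : Nonempty α := ⟨(hne i₀ hi₀).choose⟩
      choose! g hgU hgE using hU
      obtain ⟨x, -, hx⟩ : ∃ x ∈ U, k ! * p ^ k < #{i ∈ s | g i = x} := by
        refine exists_lt_card_fiber_of_mul_lt_card_of_maps_to hgU (lt_of_le_of_lt ?_ hs)
        calc #U * (k ! * p ^ k) ≤ p * (k + 1) * (k ! * p ^ k) := by gcongr
          _ = (k + 1)! * p ^ (k + 1) := by rw [Nat.factorial_succ]; ring
      have hmem : ∀ i ∈ ({i ∈ s | g i = x} : Finset ι), i ∈ s ∧ x ∈ E i := fun i hi ↦ by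
        obtain ⟨his, rfl⟩ := mem_filter.1 hi
        exact ⟨his, hgE i his⟩
      obtain ⟨t, htsub, ht, hsun⟩ := ih (E := fun i ↦ (E i).erase x)
        (fun i hi j hj hij ↦ hinj (hmem i hi).1 (hmem j hj).1
          (erase_injOn' x (hmem i hi).2 (hmem j hj).2 hij))
        (fun i hi ↦ by rw [card_erase_of_mem (hmem i hi).2, hcard i (hmem i hi).1]; rfl) hx
      exact ⟨t, fun i hi ↦ (hmem i (htsub hi)).1, ht,
        hsun.of_erase fun i hi ↦ (hmem i (htsub hi)).2⟩

theorem exists_isSunflowerFam_of_Sun_lt_card {p k : ℕ} (hp : 0 < p) {F : Finset (Finset ℕ)}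
    (hF : ∀ A ∈ F, #A = k) (hlt : Sun p k < #F) : ∃ G ⊆ F, IsSunflowerFam p G := by
  suffices hN : ∃ N, ∀ F : Finset (Finset ℕ), (∀ A ∈ F, #A = k) → N < #F →
      ∃ G ⊆ F, IsSunflowerFam p G from Nat.sInf_mem hN F hF hlt
  refine ⟨k ! * (p - 1) ^ k, fun F hF hlt ↦ ?_⟩
  obtain ⟨G, hGF, hG, C, hC⟩ :=
    exists_isSunflowerOn_of_factorial_mul_pow_lt_card (p - 1) k (Set.injOn_id _) hF hlt
  exact ⟨G, hGF, by rw [hG, Nat.sub_add_cancel hp], C, fun A hA B hB hAB ↦ hC hA hB hAB⟩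

theorem exists_isSunflowerOn_of_Sun_lt_encard [Countable α] {p k : ℕ} (hp : 0 < p) {s : Set ι}
    {E : ι → Set α} (hinj : s.InjOn E) (hcard : ∀ i ∈ s, (E i).encard = k)
    (hlt : (Sun p k : ℕ∞) < s.encard) :
    ∃ t : Finset ι, ↑t ⊆ s ∧ #t = p ∧ IsSunflowerOn (t : Set ι) E := by
  classical
  obtain ⟨f, hf⟩ := Countable.exists_injective_nat α
  have hfinset : ∀ i ∈ s, ∃ A : Finset ℕ, (A : Set ℕ) = f '' E i := fun i hi ↦
    ((Set.finite_of_encard_eq_coe (hcard i hi)).image f).exists_finset_coe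
  choose! A hA using hfinset
  have hAinj : s.InjOn A := fun i hi j hj hij ↦
    hinj hi hj (hf.image_injective (by rw [← hA i hi, ← hA j hj, hij]))
  have hAcard : ∀ i ∈ s, #(A i) = k := fun i hi ↦ by
    have hAi := congrArg Set.encard (hA i hi)
    rw [Set.encard_coe_eq_coe_finsetCard, hf.encard_image, hcard i hi] at hAi
    exact_mod_cast hAi
  obtain ⟨u, hus, hu⟩ := Set.exists_subset_encard_eq (Order.add_one_le_of_lt hlt)
  lift u to Finset ι using Set.finite_of_encard_eq_coe (k := Sun p k + 1) hu
  rw [Set.encard_coe_eq_coe_finsetCard] at hu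
  have hcard_u : #u = Sun p k + 1 := by exact_mod_cast hu
  obtain ⟨G, hG, hGp, C, hC⟩ := exists_isSunflowerFam_of_Sun_lt_card hp (F := u.image A)
    (forall_mem_image.2 fun i hi ↦ hAcard i (hus hi))
    (by rw [card_image_of_injOn (hAinj.mono hus), hcard_u]; exact Nat.lt_succ_self _)
  obtain ⟨t, htu, rfl⟩ := subset_image_iff.1 hG
  have hts : (t : Set ι) ⊆ s := (coe_subset.2 htu).trans hus
  refine ⟨t, hts, by rwa [card_image_of_injOn (hAinj.mono hts)] at hGp, f ⁻¹' C, ?_⟩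
  intro i hi j hj hij
  rw [← hC _ (mem_image_of_mem A hi) _ (mem_image_of_mem A hj) (hAinj.ne (hts hi) (hts hj) hij),
    coe_inter, hA i (hts hi), hA j (hts hj), ← Set.image_inter hf, Set.preimage_image_eq _ hf]
  rfl

end Sunflower

/-! ### Hamming distance between infinite words -/

section HammingDistance

variable {n : ℕ} {a b c : ℕ → Fin n}

theorem hDist_triangle (a b c : ℕ → Fin n) : hDist n a c ≤ hDist n a b + hDist n b c := by
  refine (Set.encard_le_encard fun i hac ↦ ?_).trans (Set.encard_union_le _ _)
  by_contra hnot
  obtain ⟨hab, hbc⟩ : a i = b i ∧ b i = c i := by simpa using hnot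
  exact hac (hab.trans hbc)

theorem hDist_add_hDist_of_between (h : ∀ i, b i = a i ∨ b i = c i) :
    hDist n a b + hDist n b c = hDist n a c := by
  have hdisj : Disjoint {i | a i ≠ b i} {i | b i ≠ c i} :=
    Set.disjoint_left.2 fun i hab hbc ↦ (h i).elim (hab ∘ Eq.symm) hbc
  rw [hDist, hDist, hDist, ← Set.encard_union_eq hdisj]
  congr 1
  ext i
  rcases h i with hi | hi <;> simp [hi]

theorem exists_hDist_eq_and_hDist_add_eq (hn : 2 ≤ n) {s : ℕ → Fin n} (h : hDist n a s ≠ ⊤)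
    (ℓ : ℕ) : ∃ y, hDist n y a = ℓ ∧ hDist n y s = ℓ + hDist n a s := by
  classical
  have : Nontrivial (Fin n) := Fin.nontrivial_iff_two_le.2 hn
  obtain ⟨Q, hQ, hQcard⟩ :=
    (Set.encard_ne_top_iff.1 h).infinite_compl.exists_subset_card_eq ℓ
  choose f hf using fun x : Fin n ↦ exists_ne x
  set y : ℕ → Fin n := fun i ↦ if i ∈ Q then f (a i) else a i with hy
  have hya : hDist n y a = ℓ := by
    have hset : {i | y i ≠ a i} = Q := by ext i; by_cases hi : i ∈ Q <;> simp [hy, hi, hf]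
    rw [hDist, hset, Set.encard_coe_eq_coe_finsetCard, hQcard]
  refine ⟨y, hya, ?_⟩
  rw [← hya, hDist_add_hDist_of_between fun i ↦ ?_]
  by_cases hi : i ∈ Q
  · exact .inr (not_not.1 (hQ hi))
  · exact .inl (if_neg hi).symm

theorem exists_hDist_eq_one_and_hDist_add_eq (hab : a ≠ b) :
    ∃ c, hDist n a c = 1 ∧ 1 + hDist n c b = hDist n a b := by
  obtain ⟨i, hi⟩ := ne_iff.1 hab
  have hac : hDist n a (update a i (b i)) = 1 := by
    have hset : {j | a j ≠ update a i (b i) j} = {i} := by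
      ext j
      rcases eq_or_ne j i with rfl | hj <;> simp [*]
    rw [hDist, hset, Set.encard_singleton]
  refine ⟨update a i (b i), hac, ?_⟩
  rw [← hac, hDist_add_hDist_of_between fun j ↦ ?_]
  rcases eq_or_ne j i with rfl | hj <;> simp [*]

theorem mem_hBall_self (a : ℕ → Fin n) (r : ℕ) : a ∈ hBall n a r := by
  simp [hBall, hDist]

theorem hBall_subset_hBall_of_hDist_add_le {r r' : ℕ} (h : hDist n a b + r ≤ r') :
    hBall n a r ⊆ hBall n b r' := fun x hx ↦
  calc hDist n x b ≤ hDist n x a + hDist n a b := hDist_triangle x a b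
    _ ≤ r + hDist n a b := by gcongr; exact hx
    _ = hDist n a b + r := add_comm _ _
    _ ≤ r' := h

end HammingDistance

/-! ### Balls in maximal sets -/

section IsDMaximal

variable {n d : ℕ} {S : Set (ℕ → Fin n)}

theorem IsDMaximal.hDist_add_le_of_hBall_subset (hS : IsDMaximal n d S) (hn : 2 ≤ n)
    {a s : ℕ → Fin n} {ℓ : ℕ} (hball : hBall n a ℓ ⊆ S) (hs : s ∈ S) :
    ℓ + hDist n a s ≤ d := by
  have hfin : hDist n a s ≠ ⊤ := ne_top_of_le_ne_top (ENat.natCast_ne_top d)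
    (hS.1 a (hball (mem_hBall_self a ℓ)) s hs)
  obtain ⟨y, hya, hys⟩ := exists_hDist_eq_and_hDist_add_eq hn hfin ℓ
  exact hys ▸ hS.1 y (hball hya.le) s hs

theorem eq_of_mem_Sell_of_hBall_subset {a b : ℕ → Fin n} {ℓ r : ℕ} (ha : a ∈ Sell n S ℓ)
    (hab : hDist n a b = r) (hball : hBall n b (ℓ + r) ⊆ S) : a = b := by
  by_contra hne
  obtain ⟨c, hac, hcb⟩ := exists_hDist_eq_one_and_hDist_add_eq hne
  refine ha.2.2 ⟨c, hBall_subset_hBall_of_hDist_add_le ?_,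
    (hBall_subset_hBall_of_hDist_add_le ?_).trans hball⟩
  · rw [hac, add_comm, Nat.cast_succ]
  · calc hDist n c b + (ℓ + 1 : ℕ) = ℓ + (1 + hDist n c b) := by push_cast; ring
      _ = ℓ + r := by rw [hcb, hab]
      _ ≤ (ℓ + r : ℕ) := (Nat.cast_add ℓ r).ge

theorem exists_mem_between_of_pairwiseDisjoint {G : Finset (ℕ → Fin n)} {b s : ℕ → Fin n}
    (hdisj : (G : Set (ℕ → Fin n)).PairwiseDisjoint fun a ↦ {i | a i ≠ b i})
    (hcard : d + 2 ≤ #G) (hs : ∀ a ∈ G, hDist n a s ≤ d) :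
    ∃ a ∈ G, ∀ i, b i = a i ∨ b i = s i := by
  classical
  by_contra! hcon
  choose! f hfa hfs using hcon
  obtain ⟨a₀, ha₀⟩ : G.Nonempty := card_pos.1 (by omega)
  have hinj : Set.InjOn f (G.erase a₀) := fun a ha a' ha' h ↦ by
    have haG := mem_of_mem_erase (mem_coe.1 ha)
    have haG' := mem_of_mem_erase (mem_coe.1 ha')
    exact hdisj.elim_set haG haG' (f a) (hfa a haG).symm (h ▸ (hfa a' haG').symm)
  have hsub : ((G.erase a₀).image f : Set ℕ) ⊆ {i | a₀ i ≠ s i} := by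
    rw [coe_image, Set.image_subset_iff]
    intro a ha
    obtain ⟨hne, haG⟩ := mem_erase.1 (mem_coe.1 ha)
    have ha₀b : a₀ (f a) = b (f a) := by
      by_contra h
      exact hne (hdisj.elim_set haG ha₀ (f a) (hfa a haG).symm h)
    exact ne_of_eq_of_ne ha₀b (hfs a haG)
  have hle := (Set.encard_le_encard hsub).trans (hs a₀ ha₀)
  rw [Set.encard_coe_eq_coe_finsetCard, card_image_of_injOn hinj, card_erase_of_mem ha₀] at hle
  have hle' : #G - 1 ≤ d := by exact_mod_cast hle
  omega

theorem IsDMaximal.hBall_add_subset (hS : IsDMaximal n d S) (hn : 2 ≤ n) {ℓ r : ℕ}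
    {G : Finset (ℕ → Fin n)} {b : ℕ → Fin n} (hGS : ∀ a ∈ G, hBall n a ℓ ⊆ S)
    (hdist : ∀ a ∈ G, hDist n a b = r)
    (hdisj : (G : Set (ℕ → Fin n)).PairwiseDisjoint fun a ↦ {i | a i ≠ b i})
    (hcard : d + 2 ≤ #G) : hBall n b (ℓ + r) ⊆ S := by
  refine fun x hx ↦ hS.2.2 x fun s hs ↦ ?_
  obtain ⟨a, ha, hbetween⟩ := exists_mem_between_of_pairwiseDisjoint hdisj hcard
    fun a ha ↦ hS.1 a (hGS a ha (mem_hBall_self a ℓ)) s hs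
  calc hDist n x s ≤ hDist n x b + hDist n b s := hDist_triangle x b s
    _ ≤ (ℓ + r : ℕ) + hDist n b s := by gcongr; exact hx
    _ = ℓ + (hDist n a b + hDist n b s) := by rw [hdist a ha]; push_cast; ring
    _ = ℓ + hDist n a s := by rw [hDist_add_hDist_of_between hbetween]
    _ ≤ d := hS.hDist_add_le_of_hBall_subset hn (hGS a ha) hs

theorem IsDMaximal.card_le_of_subset_Sell (hS : IsDMaximal n d S) (hn : 2 ≤ n) {ℓ r : ℕ}
    {G : Finset (ℕ → Fin n)} {b : ℕ → Fin n} (hG : ↑G ⊆ Sell n S ℓ)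
    (hdist : ∀ a ∈ G, hDist n a b = r)
    (hdisj : (G : Set (ℕ → Fin n)).PairwiseDisjoint fun a ↦ {i | a i ≠ b i}) : #G ≤ d + 1 := by
  by_contra! hcard
  have hball := hS.hBall_add_subset hn (fun a ha ↦ (hG ha).2.1) hdist hdisj hcard
  obtain ⟨a, ha, hab⟩ := exists_mem_ne (s := G) (by omega) b
  exact hab (eq_of_mem_Sell_of_hBall_subset (hG ha) (hdist a ha) hball)

end IsDMaximal

/-! ### Sunflowers of words -/

section GraphDiff

variable {ι α : Type*} {w a : ι → α}

/-- The symmetric difference of the graphs of `a` and `w`, which encodes `a` relative to `w`. The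
pair `(i, w i)` records that `a` differs from `w` at `i`, and `(i, a i)` records the letter. -/
def graphDiff (w a : ι → α) : Set (ι × α) :=
  Set.univ.graphOn a ∆ Set.univ.graphOn w

theorem mk_self_mem_graphDiff {i : ι} : (i, w i) ∈ graphDiff w a ↔ a i ≠ w i := by
  simp [graphDiff, Set.mem_symmDiff]

theorem mk_mem_graphDiff_of_ne {i : ι} {x : α} (hx : x ≠ w i) :
    (i, x) ∈ graphDiff w a ↔ a i = x := by
  simp [graphDiff, Set.mem_symmDiff, hx.symm]

theorem graphDiff_injective (w : ι → α) : Injective (graphDiff w) := fun _ _ h ↦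
  funext fun i ↦ Set.graphOn_inj.1 (symmDiff_left_injective _ h) (Set.mem_univ i)

theorem encard_graphDiff (w a : ι → α) :
    (graphDiff w a).encard = 2 * {i | a i ≠ w i}.encard := by
  have hsdiff (f g : ι → α) :
      (Set.univ.graphOn f \ Set.univ.graphOn g).encard = {i | f i ≠ g i}.encard := by
    have hgraph : Set.univ.graphOn f \ Set.univ.graphOn g = {i | f i ≠ g i}.graphOn f := by
      ext ⟨i, x⟩
      simp only [Set.mem_sdiff, Set.mem_graphOn, Set.mem_univ, true_and, Set.mem_ofPred_eq]
      grind
    rw [hgraph, ← Set.fst_injOn_graph.encard_image, Set.image_fst_graphOn]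
  rw [graphDiff, Set.symmDiff_def, Set.encard_union_eq disjoint_sdiff_sdiff, hsdiff, hsdiff,
    two_mul]
  simp only [ne_comm]

theorem IsSunflowerOn.eq_or_subsingleton_of_graphDiff [Fintype α] {G : Finset (ι → α)}
    (hG : IsSunflowerOn (G : Set (ι → α)) (graphDiff w)) (hcard : Fintype.card α ≤ #G) (i : ι) :
    (∃ x, ∀ a ∈ G, a i = x) ∨ {a | a ∈ G ∧ a i ≠ w i}.Subsingleton := by
  classical
  rw [or_iff_not_imp_right, Set.not_subsingleton_iff]
  rintro ⟨a, ⟨ha, hai⟩, a', ⟨ha', hai'⟩, hne⟩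
  have hdiff : ∀ c ∈ G, c i ≠ w i := fun c hc ↦ mk_self_mem_graphDiff.1 <|
    hG.mem_of_mem_of_mem ha ha' hc hne (mk_self_mem_graphDiff.2 hai) (mk_self_mem_graphDiff.2 hai')
  obtain ⟨c, hc, c', hc', hcc, heq⟩ : ∃ c ∈ G, ∃ c' ∈ G, c ≠ c' ∧ c i = c' i := by
    refine exists_ne_map_eq_of_card_lt_of_maps_to (t := univ.erase (w i)) ?_ fun c hc ↦ ?_
    · exact (card_erase_lt_of_mem (mem_univ _)).trans_le hcard
    · exact mem_erase.2 ⟨hdiff c hc, mem_univ _⟩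
  refine ⟨c i, fun e he ↦ (mk_mem_graphDiff_of_ne (hdiff c hc)).1 ?_⟩
  exact hG.mem_of_mem_of_mem hc hc' he hcc ((mk_mem_graphDiff_of_ne (hdiff c hc)).2 rfl)
    ((mk_mem_graphDiff_of_ne (hdiff c hc)).2 heq.symm)

theorem IsSunflowerOn.exists_center_of_graphDiff [Fintype α] {G : Finset (ι → α)}
    (hG : IsSunflowerOn (G : Set (ι → α)) (graphDiff w)) (hcard : Fintype.card α ≤ #G) :
    ∃ b : ι → α, (∀ a ∈ G, ∀ i, b i = a i ∨ b i = w i) ∧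
      (G : Set (ι → α)).PairwiseDisjoint fun a ↦ {i | a i ≠ b i} := by
  have hletter : ∀ i, ∃ x, (∀ a ∈ G, x = a i ∨ x = w i) ∧
      {a | a ∈ G ∧ a i ≠ x}.Subsingleton := fun i ↦ by
    rcases hG.eq_or_subsingleton_of_graphDiff hcard i with ⟨x, hx⟩ | hsub
    · exact ⟨x, fun a ha ↦ .inl (hx a ha).symm, fun a ha ↦ absurd (hx a ha.1) ha.2⟩
    · exact ⟨w i, fun _ _ ↦ .inr rfl, hsub⟩
  choose b hb hsub using hletter
  refine ⟨b, fun a ha i ↦ hb i a ha, fun _ ha _ ha' hne ↦ Set.disjoint_left.2 fun i hi hi' ↦ ?_⟩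
  exact hne (hsub i ⟨ha, hi⟩ ⟨ha', hi'⟩)

end GraphDiff

theorem IsDMaximal.encard_Sell_sphere_le {n d : ℕ} {S : Set (ℕ → Fin n)} (hS : IsDMaximal n d S)
    (hn : 2 ≤ n) (w : ℕ → Fin n) (ℓ k : ℕ) :
    {a ∈ Sell n S ℓ | hDist n a w = k}.encard ≤ Sun (d + n) (2 * k) := by
  by_contra! hlt
  obtain ⟨G, hGX, hGcard, hsun⟩ := exists_isSunflowerOn_of_Sun_lt_encard (by omega)
    (graphDiff_injective w).injOn (fun a ha ↦ by
      rw [encard_graphDiff, ← hDist, ha.2, Nat.cast_mul, Nat.cast_ofNat]) hlt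
  obtain ⟨b, hbetween, hdisj⟩ := hsun.exists_center_of_graphDiff (by rw [Fintype.card_fin]; omega)
  have hsum : ∀ a ∈ G, hDist n a b + hDist n b w = k := fun a ha ↦
    (hDist_add_hDist_of_between (hbetween a ha)).trans (hGX ha).2
  obtain ⟨a₀, ha₀⟩ : G.Nonempty := card_pos.1 (by omega)
  have hfin := WithTop.add_ne_top.1 (hsum a₀ ha₀ ▸ ENat.natCast_ne_top k)
  obtain ⟨r, hr⟩ := ENat.ne_top_iff_exists.1 hfin.1
  have hdist : ∀ a ∈ G, hDist n a b = r := fun a ha ↦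
    hr ▸ ENat.add_left_injective_of_ne_top hfin.2 ((hsum a ha).trans (hsum a₀ ha₀).symm)
  have hle := hS.card_le_of_subset_Sell hn (fun a ha ↦ (hGX ha).1) hdist hdisj
  omega

/-! ### Templates -/

section Template

variable {n : ℕ} {a w : ℕ → Fin n} {t : ℕ → Option (Fin n)}

/-- The word obtained from `w` by writing the letters of the template `t` over it. -/
def overwrite (w : ℕ → Fin n) (t : ℕ → Option (Fin n)) : ℕ → Fin n :=
  fun i ↦ (t i).getD (w i)

theorem RegularWrt.hDist_overwrite (h : RegularWrt n w t) :
    hDist n (overwrite w t) w = {i | t i ≠ none}.encard := by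
  rw [hDist]
  congr 1
  ext i
  have hi := h i
  cases hti : t i <;> simp_all [overwrite]

theorem Fits.hDist_overwrite_add (h : Fits n a t) (w : ℕ → Fin n) :
    hDist n a (overwrite w t) + hDist n (overwrite w t) w = hDist n a w := by
  refine hDist_add_hDist_of_between fun i ↦ ?_
  cases hti : t i with
  | none => exact .inr (by simp [overwrite, hti])
  | some x => exact .inl (by simp [overwrite, hti, h i x hti])

end Template

theorem stmt10_general (n d : ℕ) (hn : 2 ≤ n) (S : Set (ℕ → Fin n)) (hmax : IsDMaximal n d S)
    (w : ℕ → Fin n) (ℓ k m : ℕ)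
    (t : ℕ → Option (Fin n)) (htfin : {i | t i ≠ none}.Finite)
    (hwt : {i | t i ≠ none}.ncard = m) (hreg : RegularWrt n w t) :
    {a ∈ Sell n S ℓ | hDist n a w = (k : ℕ∞) ∧ Fits n a t}.encard ≤
      (Sun (d + n) (2 * k - 2 * m) : ℕ∞) := by
  have hweight : hDist n (overwrite w t) w = m := by
    rw [hreg.hDist_overwrite, ← htfin.cast_ncard_eq, hwt]
  have hsub : {a ∈ Sell n S ℓ | hDist n a w = (k : ℕ∞) ∧ Fits n a t} ⊆
      {a ∈ Sell n S ℓ | hDist n a (overwrite w t) = (k - m : ℕ)} := by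
    rintro a ⟨ha, hk, hfit⟩
    have hadd := hfit.hDist_overwrite_add w
    rw [hweight, hk] at hadd
    refine ⟨ha, ?_⟩
    rw [ENat.natCast_sub]
    exact (ENat.addLECancellable_natCast m).eq_tsub_of_add_eq hadd
  rw [← Nat.mul_sub]
  exact (Set.encard_le_encard hsub).trans (hmax.encard_Sell_sphere_le hn _ ℓ (k - m))

theorem stmt10 (n d : ℕ) (hn : 2 ≤ n) (hd : 1 ≤ d)
    (S : Set (ℕ → Fin n)) (hmax : IsDMaximal n d S)
    (w : ℕ → Fin n) (hw : w ∈ S)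
    (ℓ k m : ℕ) (hmk : m ≤ k)
    (t : ℕ → Option (Fin n)) (htfin : {i | t i ≠ none}.Finite)
    (hwt : {i | t i ≠ none}.ncard = m) (hreg : RegularWrt n w t) :
    {a ∈ Sell n S ℓ | hDist n a w = (k : ℕ∞) ∧ Fits n a t}.encard ≤
      (Sun (d + n) (2 * k - 2 * m) : ℕ∞) :=
  stmt10_general n d hn S hmax w ℓ k m t htfin hwt hreg
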